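/- arXiv:math/9503212 — 2 statements merged into one kernel-verified Lean document; each statement's English description precedes it below -/
import Mathlib

section
/- Let X_1,…,X_k be jointly symmetric q-stable random variables (0<q≤2) and m<k. Then E[∏_{i=1}^k (1-|X_i|)_+] ≥ E[∏_{i=1}^m (1-|X_i|)_+] · E[∏_{i=m+1}^k (1-|X_i|)_+], where (1-|t|)_+ = max(1-|t|, 0). -/
open MeasureTheory
open scoped RealInnerProductSpace

open scoped ENNReal FourierTransform Convolution

/-!
Let `P` be the law of `Y`, with characteristic function `r a = exp (-‖T a‖ ^ q)` where `T` is a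
linear map into `L^q`, such as `θ ↦ ∑ i, θ i • s i`. If `f` and `g` are the characteristic
functions of `μ` and `ν`, then `∫ f dP = ∫ r dμ` by Fubini. Since `g` is real, `ν` and its
reflection have the same characteristic function, so `f * g` comes both from `μ ∗ ν` and from the
convolution of `μ` with the reflection of `ν`; averaging the two gives

  `2 ∫ f g dP = ∫∫ (r (a + b) + r (a - b)) dμ(a) dν(b)`.

It remains to see that `2 r(a) r(b) ≤ r (a + b) + r (a - b)`, which follows by AM-GM from

  `‖φ + ψ‖ ^ q + ‖φ - ψ‖ ^ q ≤ 2 (‖φ‖ ^ q + ‖ψ‖ ^ q)`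

in `L^q`, that is, from the parallelogram law and the concavity of `t ↦ t ^ (q / 2)`. The triangle
function qualifies for `f` and `g` because it is the self-convolution of an interval, so that its
Fourier transform is a square.
-/

section ParallelogramInequality

lemma norm_add_rpow_add_norm_sub_rpow_le {H : Type*} [NormedAddCommGroup H]
    [InnerProductSpace ℝ H] {q : ℝ} (hq0 : 0 ≤ q) (hq2 : q ≤ 2) (x y : H) :
    ‖x + y‖ ^ q + ‖x - y‖ ^ q ≤ 2 * (‖x‖ ^ q + ‖y‖ ^ q) := by
  have rpow_eq_sq_rpow (z : H) : ‖z‖ ^ q = (‖z‖ ^ 2) ^ (q / 2) := by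
    rw [← Real.rpow_natCast_mul (norm_nonneg z), Nat.cast_ofNat, mul_div_cancel₀ q two_ne_zero]
  have parallelogram : 1 / 2 * ‖x + y‖ ^ 2 + 1 / 2 * ‖x - y‖ ^ 2 = ‖x‖ ^ 2 + ‖y‖ ^ 2 := by
    linarith [parallelogram_law_with_norm ℝ x y]
  have concave : 1 / 2 * ‖x + y‖ ^ q + 1 / 2 * ‖x - y‖ ^ q ≤
      (‖x‖ ^ 2 + ‖y‖ ^ 2) ^ (q / 2) := by
    rw [rpow_eq_sq_rpow (x + y), rpow_eq_sq_rpow (x - y), ← parallelogram]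
    exact (Real.concaveOn_rpow (by linarith) (by linarith)).2
      (Set.mem_Ici.2 (sq_nonneg ‖x + y‖)) (Set.mem_Ici.2 (sq_nonneg ‖x - y‖))
      (by norm_num) (by norm_num) (by norm_num)
  have subadditive : (‖x‖ ^ 2 + ‖y‖ ^ 2) ^ (q / 2) ≤ ‖x‖ ^ q + ‖y‖ ^ q := by
    rw [rpow_eq_sq_rpow x, rpow_eq_sq_rpow y]
    exact Real.rpow_add_le_add_rpow (sq_nonneg _) (sq_nonneg _) (by linarith) (by linarith)
  linarith

variable {α : Type*} [MeasurableSpace α] {μ : Measure α} {p : ℝ≥0∞}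

lemma Lp_norm_rpow_eq_integral {F : Type*} [NormedAddCommGroup F] (hp0 : p ≠ 0) (hp : p ≠ ∞)
    (f : Lp F p μ) : ‖f‖ ^ p.toReal = ∫ x, ‖f x‖ ^ p.toReal ∂μ := by
  have hf := Lp.aestronglyMeasurable f
  rw [Lp.norm_def, toReal_eLpNorm hf, lpNorm_eq_integral_norm_rpow_toReal hp0 hp hf,
    Real.rpow_inv_rpow (integral_nonneg fun _ ↦ by positivity) (ENNReal.toReal_pos hp0 hp).ne']

lemma Lp_norm_add_rpow_add_norm_sub_rpow_le {H : Type*} [NormedAddCommGroup H]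
    [InnerProductSpace ℝ H] (hp0 : p ≠ 0) (hp2 : p ≤ 2) (f g : Lp H p μ) :
    ‖f + g‖ ^ p.toReal + ‖f - g‖ ^ p.toReal ≤ 2 * (‖f‖ ^ p.toReal + ‖g‖ ^ p.toReal) := by
  have hp : p ≠ ∞ := (hp2.trans_lt ENNReal.ofNat_lt_top).ne
  have hint (h : Lp H p μ) : Integrable (fun x ↦ ‖h x‖ ^ p.toReal) μ :=
    (Lp.memLp h).integrable_norm_rpow hp0 hp
  simp only [Lp_norm_rpow_eq_integral hp0 hp]
  rw [← integral_add (hint _) (hint _), ← integral_add (hint _) (hint _), ← integral_const_mul]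
  refine integral_mono_ae ((hint _).add (hint _)) (((hint _).add (hint _)).const_mul _) ?_
  filter_upwards [Lp.coeFn_add f g, Lp.coeFn_sub f g] with x hadd hsub
  simp only [hadd, hsub, Pi.add_apply, Pi.sub_apply]
  exact norm_add_rpow_add_norm_sub_rpow_le ENNReal.toReal_nonneg
    (ENNReal.toReal_le_of_le_ofReal zero_le_two (by simpa using hp2)) (f x) (g x)

lemma two_mul_exp_neg_mul_exp_neg_le {a b c d : ℝ} (h : c + d ≤ 2 * (a + b)) :
    2 * (Real.exp (-a) * Real.exp (-b)) ≤ Real.exp (-c) + Real.exp (-d) :=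
  calc 2 * (Real.exp (-a) * Real.exp (-b))
      ≤ 2 * (Real.exp (-c / 2) * Real.exp (-d / 2)) := by
        rw [← Real.exp_add, ← Real.exp_add]
        exact mul_le_mul_of_nonneg_left (Real.exp_le_exp.2 (by linarith)) zero_le_two
    _ ≤ Real.exp (-c / 2) ^ 2 + Real.exp (-d / 2) ^ 2 := by
        linarith [two_mul_le_add_sq (Real.exp (-c / 2)) (Real.exp (-d / 2))]
    _ = Real.exp (-c) + Real.exp (-d) := by
        rw [← Real.exp_nat_mul, ← Real.exp_nat_mul, Nat.cast_ofNat, mul_div_cancel₀ _ two_ne_zero,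
          mul_div_cancel₀ _ two_ne_zero]

end ParallelogramInequality

section CharFun

variable {E : Type*} [NormedAddCommGroup E] [InnerProductSpace ℝ E] [MeasurableSpace E]

/-- A real function is a characteristic function if it is the Fourier transform `charFun μ` of some
finite measure `μ`. On a finite-dimensional space these are, by Bochner's theorem, the continuous
even positive definite functions; this form of positive definiteness is the one that can be
integrated. -/
def IsCharFun (f : E → ℝ) : Prop :=
  ∃ μ : Measure E, IsFiniteMeasure μ ∧ ∀ y, charFun μ y = f y

variable [BorelSpace E]

lemma charFun_map_neg (μ : Measure E) (y : E) : charFun (μ.map (-·)) y = charFun μ (-y) := by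
  simpa only [neg_smul, one_smul] using charFun_map_smul (μ := μ) (-1) y

namespace IsCharFun

lemma one : IsCharFun (fun _ : E ↦ 1) :=
  ⟨Measure.dirac 0, inferInstance, fun y ↦ by simp⟩

lemma comp_inner {f : ℝ → ℝ} (hf : IsCharFun f) (v : E) : IsCharFun (fun y : E ↦ f ⟪y, v⟫) := by
  obtain ⟨μ, _, hμ⟩ := hf
  refine ⟨μ.map (fun t ↦ t • v), inferInstance, fun y ↦ ?_⟩
  rw [← hμ, charFun_apply, integral_map (by fun_prop) (by fun_prop), charFun_apply]
  simp only [real_inner_smul_left, real_inner_comm y v, RCLike.inner_apply', conj_trivial]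

variable [SecondCountableTopology E] {f g : E → ℝ}

lemma mul (hf : IsCharFun f) (hg : IsCharFun g) : IsCharFun (fun y ↦ f y * g y) := by
  obtain ⟨μ, _, hμ⟩ := hf
  obtain ⟨ν, _, hν⟩ := hg
  exact ⟨μ.conv ν, inferInstance, fun y ↦ by rw [charFun_conv, hμ, hν, Complex.ofReal_mul]⟩

lemma prod {ι : Type*} {f : ι → E → ℝ} {s : Finset ι} (hf : ∀ i ∈ s, IsCharFun (f i)) :
    IsCharFun (fun y ↦ ∏ i ∈ s, f i y) := by
  rw [← Finset.prod_fn]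
  exact Finset.prod_induction f IsCharFun (fun _ _ ↦ mul) one hf

lemma measurable (hf : IsCharFun f) : Measurable f := by
  obtain ⟨μ, _, hμ⟩ := hf
  have f_eq_re : f = fun y ↦ (charFun μ y).re := by simp only [hμ, Complex.ofReal_re]
  rw [f_eq_re]
  fun_prop

lemma integrable_comp (hf : IsCharFun f) {α : Type*} [MeasurableSpace α] {ν : Measure α}
    [IsFiniteMeasure ν] {φ : α → E} (hφ : Measurable φ) : Integrable (fun x ↦ f (φ x)) ν := by
  have hmeas := hf.measurable
  obtain ⟨μ, _, hμ⟩ := hf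
  refine .of_bound (hmeas.comp hφ).aestronglyMeasurable (μ.real Set.univ) (.of_forall fun x ↦ ?_)
  simpa only [hμ, Complex.norm_real] using norm_charFun_le (μ := μ) (φ x)

end IsCharFun

section Correlation

variable [SecondCountableTopology E] {P μ ν : Measure E} [IsFiniteMeasure P] [IsFiniteMeasure μ]
  [IsFiniteMeasure ν] {f g r : E → ℝ}

lemma integral_charFun_comm (μ ν : Measure E) [IsFiniteMeasure μ] [IsFiniteMeasure ν] :
    ∫ y, charFun μ y ∂ν = ∫ x, charFun ν x ∂μ := by
  simp only [charFun_apply]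
  rw [integral_integral_swap]
  · simp only [real_inner_comm]
  · refine .of_bound (C := 1) (by fun_prop) (.of_forall fun p ↦ ?_)
    simp only [Function.uncurry, Complex.norm_exp_ofReal_mul_I, le_refl]

lemma integral_eq_integral_of_charFun_eq (hP : ∀ a, charFun P a = r a)
    (hμ : ∀ y, charFun μ y = f y) : ∫ y, f y ∂P = ∫ a, r a ∂μ := by
  have h := integral_charFun_comm μ P
  simp only [hμ, hP, integral_complex_ofReal] at h
  exact_mod_cast h

lemma integral_mul_eq_integral_prod_add (hP : ∀ a, charFun P a = r a)
    (hμ : ∀ y, charFun μ y = f y) (hν : ∀ y, charFun ν y = g y) :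
    ∫ y, f y * g y ∂P = ∫ p, r (p.1 + p.2) ∂μ.prod ν := by
  have hr : IsCharFun r := ⟨P, inferInstance, hP⟩
  rw [integral_eq_integral_of_charFun_eq (μ := μ.conv ν) hP fun y ↦ by
      rw [charFun_conv, hμ, hν, Complex.ofReal_mul],
    Measure.conv, integral_map (by fun_prop) hr.measurable.aestronglyMeasurable]

lemma integral_mul_eq_integral_prod_sub (hP : ∀ a, charFun P a = r a)
    (hμ : ∀ y, charFun μ y = f y) (hν : ∀ y, charFun ν y = g y) :
    ∫ y, f y * g y ∂P = ∫ p, r (p.1 - p.2) ∂μ.prod ν := by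
  have hr : IsCharFun r := ⟨P, inferInstance, hP⟩
  have hmap : μ.prod (ν.map (-·)) = (μ.prod ν).map (Prod.map id (-·)) := by
    rw [← Measure.map_prod_map _ _ measurable_id measurable_neg, Measure.map_id]
  have hν_neg (y : E) : charFun (ν.map (-·)) y = g y := by
    rw [charFun_map_neg, charFun_neg, hν, Complex.conj_ofReal]
  rw [integral_mul_eq_integral_prod_add hP hμ hν_neg, hmap,
    integral_map (f := fun p : E × E ↦ r (p.1 + p.2)) (by fun_prop)
      (hr.measurable.comp (by fun_prop)).aestronglyMeasurable]
  simp only [Prod.map_fst, Prod.map_snd, id_eq, sub_eq_add_neg]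

theorem IsCharFun.integral_mul_integral_le (hf : IsCharFun f) (hg : IsCharFun g)
    (hP : ∀ a, charFun P a = r a) (hr : ∀ a b, 2 * (r a * r b) ≤ r (a + b) + r (a - b)) :
    (∫ y, f y ∂P) * (∫ y, g y ∂P) ≤ ∫ y, f y * g y ∂P := by
  have hrP : IsCharFun r := ⟨P, inferInstance, hP⟩
  obtain ⟨μ, _, hμ⟩ := hf
  obtain ⟨ν, _, hν⟩ := hg
  have hadd : Integrable (fun p : E × E ↦ r (p.1 + p.2)) (μ.prod ν) :=
    hrP.integrable_comp (by fun_prop)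
  have hsub : Integrable (fun p : E × E ↦ r (p.1 - p.2)) (μ.prod ν) :=
    hrP.integrable_comp (by fun_prop)
  have hmul : Integrable (fun p : E × E ↦ r p.1 * r p.2) (μ.prod ν) :=
    (hrP.integrable_comp measurable_id).mul_prod (hrP.integrable_comp measurable_id)
  suffices 2 * ((∫ y, f y ∂P) * (∫ y, g y ∂P)) ≤ 2 * ∫ y, f y * g y ∂P by linarith
  calc 2 * ((∫ y, f y ∂P) * (∫ y, g y ∂P))
      = ∫ p, 2 * (r p.1 * r p.2) ∂μ.prod ν := by
        rw [integral_const_mul, integral_prod_mul, integral_eq_integral_of_charFun_eq hP hμ,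
          integral_eq_integral_of_charFun_eq hP hν]
    _ ≤ ∫ p, (r (p.1 + p.2) + r (p.1 - p.2)) ∂μ.prod ν :=
        integral_mono (hmul.const_mul 2) (hadd.add hsub) fun p ↦ hr p.1 p.2
    _ = 2 * ∫ y, f y * g y ∂P := by
        rw [integral_add hadd hsub, ← integral_mul_eq_integral_prod_add hP hμ hν,
          ← integral_mul_eq_integral_prod_sub hP hμ hν, two_mul]

end Correlation

end CharFun

section Triangle

lemma IsCharFun.of_fourier_eq {V : Type*} [NormedAddCommGroup V] [InnerProductSpace ℝ V]
    [FiniteDimensional ℝ V] [MeasurableSpace V] [BorelSpace V] {f g : V → ℝ} (hf : Continuous f)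
    (hf_int : Integrable f) (hg : 0 ≤ g) (hg_int : Integrable g)
    (hfg : ∀ w, 𝓕 (fun x ↦ (f x : ℂ)) w = g w) : IsCharFun f := by
  let ρ : Measure V := volume.withDensity fun w ↦ ENNReal.ofReal (g w)
  have : IsFiniteMeasure ρ := isFiniteMeasure_withDensity_ofReal hg_int.2
  have inversion : 𝓕⁻ (fun w ↦ (g w : ℂ)) = fun x ↦ (f x : ℂ) := by
    rw [← funext hfg]
    refine Continuous.fourierInv_fourier_eq (by fun_prop) hf_int.ofReal ?_
    rw [funext hfg]
    exact hg_int.ofReal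
  refine ⟨ρ.map ((2 * Real.pi) • ·), inferInstance, fun y ↦ ?_⟩
  rw [← congrFun inversion y, Real.fourierInv_eq', charFun_map_smul, charFun_apply,
    integral_withDensity_eq_integral_toReal_smul₀ hg_int.aemeasurable.ennreal_ofReal
      (.of_forall fun _ ↦ ENNReal.ofReal_lt_top)]
  simp only [ENNReal.toReal_ofReal (hg _), real_inner_smul_right, smul_eq_mul, Complex.real_smul,
    mul_comm]

lemma convolution_indicator_Icc (r t : ℝ) :
    ((Set.Icc (-r) r).indicator 1 ⋆[ContinuousLinearMap.mul ℂ ℂ]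
      (Set.Icc (-r) r).indicator 1 : ℝ → ℂ) t = (max (2 * r - |t|) 0 : ℝ) := by
  have hmul (x : ℝ) : (Set.Icc (-r) r).indicator (1 : ℝ → ℂ) x *
      (Set.Icc (-r) r).indicator (1 : ℝ → ℂ) (t - x) =
        (Set.Icc (max (-r) (t - r)) (min r (t + r))).indicator 1 x := by
    have hmem : t - x ∈ Set.Icc (-r) r ↔ x ∈ Set.Icc (t - r) (t + r) := by
      constructor <;> rintro ⟨_, _⟩ <;> constructor <;> linarith
    rw [← Set.Icc_inter_Icc, Set.inter_indicator_one]
    simp only [Pi.mul_apply, Set.indicator_apply, hmem, Pi.one_apply]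
  have hlength : min r (t + r) - max (-r) (t - r) = 2 * r - |t| := by
    rcases le_total 0 t with ht | ht
    · rw [min_eq_left (by linarith), max_eq_right (by linarith), abs_of_nonneg ht]
      ring
    · rw [min_eq_right (by linarith), max_eq_left (by linarith), abs_of_nonpos ht]
      ring
  simp only [convolution_def, ContinuousLinearMap.mul_apply', hmul]
  rw [integral_indicator measurableSet_Icc]
  simp only [Pi.one_apply, setIntegral_const, Real.volume_real_Icc, hlength, Complex.real_smul,
    mul_one]

lemma integral_exp_mul_mul_I (c r : ℝ) :
    ∫ x in -r..r, Complex.exp ((c * x : ℝ) * Complex.I) = (2 * r * Real.sinc (c * r) : ℝ) := by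
  rcases eq_or_ne c 0 with rfl | hc
  · simp only [zero_mul, Complex.ofReal_zero, Complex.exp_zero, intervalIntegral.integral_const,
      Real.sinc_zero, Complex.real_smul, mul_one, sub_neg_eq_add, two_mul]
  · rw [intervalIntegral.integral_comp_mul_left (fun x : ℝ ↦ Complex.exp (x * Complex.I)) hc,
      mul_neg, integral_exp_mul_I_eq_sinc, Complex.real_smul, Complex.ofReal_inv,
      inv_mul_eq_iff_eq_mul₀ (Complex.ofReal_ne_zero.2 hc)]
    push_cast
    ring

lemma fourier_indicator_Icc {r : ℝ} (hr : 0 ≤ r) (w : ℝ) :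
    𝓕 ((Set.Icc (-r) r).indicator (1 : ℝ → ℂ)) w =
      (2 * r * Real.sinc (2 * Real.pi * r * w) : ℝ) := by
  have hfourier : 𝓕 ((Set.Icc (-r) r).indicator (1 : ℝ → ℂ)) w =
      ∫ x in -r..r, Complex.exp ((-2 * Real.pi * w * x : ℝ) * Complex.I) := by
    rw [Real.fourier_real_eq_integral_exp_smul, intervalIntegral.integral_of_le (by linarith),
      ← integral_Icc_eq_integral_Ioc, ← integral_indicator measurableSet_Icc]
    congr with x
    simp only [Set.indicator_apply, Pi.one_apply, smul_eq_mul, mul_ite, mul_one, mul_zero,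
      mul_right_comm]
  rw [hfourier, integral_exp_mul_mul_I, ← Real.sinc_neg]
  ring_nf

lemma integrable_sinc_sq : Integrable (fun x ↦ Real.sinc x ^ 2) := by
  refine (integrable_inv_one_add_sq.const_mul 2).mono' (by fun_prop) (.of_forall fun x ↦ ?_)
  have hsin : Real.sinc x ^ 2 * x ^ 2 ≤ 1 := by
    rcases eq_or_ne x 0 with rfl | hx
    · norm_num
    · rw [Real.sinc_of_ne_zero hx, ← mul_pow, div_mul_cancel₀ _ hx]
      exact Real.sin_sq_le_one x
  have hone : Real.sinc x ^ 2 ≤ 1 := (sq_le_one_iff_abs_le_one _).2 (Real.abs_sinc_le_one x)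
  rw [Real.norm_of_nonneg (sq_nonneg _), ← div_eq_mul_inv, le_div_iff₀ (by positivity)]
  linarith

lemma isCharFun_triangle : IsCharFun (fun t : ℝ ↦ max (1 - |t|) 0) := by
  have hindicator : Integrable ((Set.Icc (-(1 / 2)) (1 / 2)).indicator (1 : ℝ → ℂ)) :=
    (integrable_indicator_iff measurableSet_Icc).2 (integrableOn_const (by simp))
  have hconv : (fun t : ℝ ↦ ((max (1 - |t|) 0 : ℝ) : ℂ)) =
      (Set.Icc (-(1 / 2)) (1 / 2)).indicator 1 ⋆[ContinuousLinearMap.mul ℂ ℂ]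
        (Set.Icc (-(1 / 2)) (1 / 2)).indicator 1 := by
    ext t
    rw [convolution_indicator_Icc, mul_one_div_cancel two_ne_zero]
  have hint : Integrable (fun t : ℝ ↦ ((max (1 - |t|) 0 : ℝ) : ℂ)) :=
    hconv ▸ hindicator.integrable_convolution _ hindicator
  refine .of_fourier_eq (g := fun w ↦ Real.sinc (Real.pi * w) ^ 2) (by fun_prop)
    (by simpa using hint.re) (fun w ↦ sq_nonneg _)
    (integrable_sinc_sq.comp_mul_left' Real.pi_ne_zero) fun w ↦ ?_
  rw [hconv, Real.fourier_mul_convolution_eq hindicator hindicator,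
    fourier_indicator_Icc (by norm_num)]
  push_cast
  ring_nf

end Triangle

theorem stable_correlation_triangle_general
    {q : ℝ} (hq0 : 0 < q) (hq2 : q ≤ 2)
    {E : Type*} [NormedAddCommGroup E] [InnerProductSpace ℝ E] [MeasurableSpace E]
    [BorelSpace E] [SecondCountableTopology E]
    {H : Type*} [NormedAddCommGroup H] [InnerProductSpace ℝ H]
    {α : Type*} [MeasurableSpace α] {μ : Measure α}
    {Ω : Type*} [MeasurableSpace Ω] {P : Measure Ω} [IsFiniteMeasure P]
    {Y : Ω → E} (hY : AEMeasurable Y P)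
    (T : E →ₗ[ℝ] Lp H (ENNReal.ofReal q) μ)
    (hchar : ∀ θ : E, ∫ ω, Complex.exp ((⟪θ, Y ω⟫ : ℝ) * Complex.I) ∂P =
      Complex.exp (-(‖T θ‖ ^ q : ℝ)))
    {ι : Type*} (ξ : ι → E) (A B : Finset ι) :
    (∫ ω, ∏ i ∈ A, max (1 - |⟪Y ω, ξ i⟫|) 0 ∂P) * (∫ ω, ∏ i ∈ B, max (1 - |⟪Y ω, ξ i⟫|) 0 ∂P) ≤
      ∫ ω, (∏ i ∈ A, max (1 - |⟪Y ω, ξ i⟫|) 0) * ∏ i ∈ B, max (1 - |⟪Y ω, ξ i⟫|) 0 ∂P := by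
  have hlaw (θ : E) : charFun (P.map Y) θ = (Real.exp (-‖T θ‖ ^ q) : ℝ) := by
    rw [charFun_apply, integral_map hY (by fun_prop)]
    simpa only [real_inner_comm, Complex.ofReal_exp, Complex.ofReal_neg] using hchar θ
  have htriangle (S : Finset ι) : IsCharFun (fun y ↦ ∏ i ∈ S, max (1 - |⟪y, ξ i⟫|) 0) :=
    .prod fun i _ ↦ isCharFun_triangle.comp_inner (ξ i)
  have hparallelogram (a b : E) :
      ‖T (a + b)‖ ^ q + ‖T (a - b)‖ ^ q ≤ 2 * (‖T a‖ ^ q + ‖T b‖ ^ q) := by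
    simpa only [map_add, map_sub, ENNReal.toReal_ofReal hq0.le] using
      Lp_norm_add_rpow_add_norm_sub_rpow_le (ENNReal.ofReal_pos.2 hq0).ne'
        (ENNReal.ofReal_le_of_le_toReal (by simpa using hq2)) (T a) (T b)
  have hcorrelation := (htriangle A).integral_mul_integral_le (htriangle B) hlaw
    fun a b ↦ two_mul_exp_neg_mul_exp_neg_le (hparallelogram a b)
  rwa [integral_map hY (by fun_prop), integral_map hY (by fun_prop),
    integral_map hY (by fun_prop)] at hcorrelation

/-- Example (i): correlation inequality for the functions `(1-|t|)₊` of jointly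
symmetric `q`-stable random variables. -/
theorem stable_correlation_triangle
    (q : ℝ) (hq0 : 0 < q) (hq2 : q ≤ 2)
    (n k m : ℕ) (hm : m < k)
    (Ω : Type*) [MeasureSpace Ω] [IsProbabilityMeasure (volume : Measure Ω)]
    (Y : Ω → EuclideanSpace ℝ (Fin n)) (hY : Measurable Y)
    (s : Fin n → Lp ℝ (ENNReal.ofReal q) (volume.restrict (Set.Icc (0:ℝ) 1)))
    (hchar : ∀ θ : EuclideanSpace ℝ (Fin n),
      ∫ ω, Complex.exp ((⟪θ, Y ω⟫ : ℝ) * Complex.I) =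
        Complex.exp (-(‖∑ i, θ i • s i‖ ^ q : ℝ)))
    (ξ : Fin k → EuclideanSpace ℝ (Fin n))
    (X : Fin k → Ω → ℝ) (hX : ∀ i ω, X i ω = ⟪Y ω, ξ i⟫) :
    ∫ ω, ∏ i : Fin k, max (1 - |X i ω|) 0 ≥
      (∫ ω, ∏ i ∈ Finset.univ.filter (fun i : Fin k => (i : ℕ) < m),
          max (1 - |X i ω|) 0) *
      (∫ ω, ∏ i ∈ Finset.univ.filter (fun i : Fin k => m ≤ (i : ℕ)),
          max (1 - |X i ω|) 0) := by
  simpa only [hX, ← not_lt, Finset.prod_filter_mul_prod_filter_not] using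
    stable_correlation_triangle_general hq0 hq2 hY.aemeasurable
      (Fintype.linearCombination ℝ s ∘ₗ (WithLp.linearEquiv 2 ℝ (Fin n → ℝ)).toLinearMap) hchar ξ
      {i : Fin k | (i : ℕ) < m} {i : Fin k | ¬ (i : ℕ) < m}
end

section
/- (Prékopa–Leindler marginal theorem) If f: ℝ^k → [0,∞) is log-concave and 0 < m < k, then g(x) = ∫_{ℝ^{k-m}} f(x, z) dz is log-concave on ℝ^m. -/
open MeasureTheory

/-!
In dimension one, superlevel sets satisfy `{f > r} + {g > r} ⊆ {h > r}` (with weights `t`, `s`), so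
the Brunn–Minkowski inequality on the line and the layer cake formula bound a weighted arithmetic
mean of `∫ f` and `∫ g` by `∫ h`, provided `f` and `g` have the same supremum. Normalising the
suprema, which is harmless because the multiplicative inequality is homogeneous, and applying AM-GM
gives the Prékopa–Leindler inequality on `ℝ`. By Fubini the inequality passes to products of
measures, hence to `ℝⁿ`; applied to the slices `f (x, ·)` and `f (y, ·)` of a log-concave function
it is the log-concavity of the marginal.
-/

open Set
open scoped ENNReal Pointwise

theorem ennreal_geom_mean_le_arith_mean2_weighted {t s : ℝ} (ht : 0 < t) (hs : 0 < s)
    (hts : t + s = 1) (a b : ℝ≥0∞) :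
    a ^ t * b ^ s ≤ ENNReal.ofReal t * a + ENNReal.ofReal s * b := by
  obtain rfl | ha := eq_or_ne a ∞
  · simp [ENNReal.mul_top, ht]
  obtain rfl | hb := eq_or_ne b ∞
  · simp [ENNReal.mul_top, hs]
  lift a to NNReal using ha
  lift b to NNReal using hb
  lift t to NNReal using ht.le
  lift s to NNReal using hs.le
  rw [← ENNReal.coe_rpow_of_nonneg _ t.coe_nonneg, ← ENNReal.coe_rpow_of_nonneg _ s.coe_nonneg,
    ENNReal.ofReal_coe_nnreal, ENNReal.ofReal_coe_nnreal]
  exact_mod_cast NNReal.geom_mean_le_arith_mean2_weighted t s a b (by exact_mod_cast hts)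

theorem ennreal_rpow_mul_rpow_self {t s : ℝ} (ht : 0 ≤ t) (hs : 0 ≤ s) (hts : t + s = 1)
    (a : ℝ≥0∞) : a ^ t * a ^ s = a := by
  rw [← ENNReal.rpow_add_of_nonneg _ _ ht hs, hts, ENNReal.rpow_one]

theorem ennreal_iSup_rpow {ι : Sort*} (a : ι → ℝ≥0∞) {t : ℝ} (ht : 0 < t) :
    (⨆ i, a i) ^ t = ⨆ i, a i ^ t :=
  (ENNReal.orderIsoRpow t ht).map_iSup a

theorem volume_restrict_Ioi_ofReal_lt (a : ℝ≥0∞) :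
    volume.restrict (Ioi (0 : ℝ)) {r | ENNReal.ofReal r < a} = a := by
  rw [Measure.restrict_apply (measurableSet_lt ENNReal.measurable_ofReal measurable_const)]
  obtain rfl | ha := eq_or_ne a ∞
  · simp
  lift a to NNReal using ha
  have : {r | ENNReal.ofReal r < a} ∩ Ioi 0 = Ioo (0 : ℝ) a := by
    ext r
    simp only [mem_inter_iff, mem_ofPred_eq, mem_Ioi, mem_Ioo, and_comm (b := 0 < r)]
    refine and_congr_right fun hr => ?_
    rw [← ENNReal.ofReal_coe_nnreal, ENNReal.ofReal_lt_ofReal_iff_of_nonneg hr.le]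
  simp [this]

section MeasurableFunctions

variable {α : Type*} [MeasurableSpace α] {μ : Measure α} {f : α → ℝ≥0∞}

theorem lintegral_eq_lintegral_measure_ofReal_lt [SFinite μ] (hf : Measurable f) :
    ∫⁻ x, f x ∂μ = ∫⁻ r in Ioi (0 : ℝ), μ {x | ENNReal.ofReal r < f x} := by
  have hS : MeasurableSet {p : α × ℝ | ENNReal.ofReal p.2 < f p.1} :=
    measurableSet_lt (by fun_prop) (by fun_prop)
  calc ∫⁻ x, f x ∂μ
      = ∫⁻ x, volume.restrict (Ioi (0 : ℝ)) {r | ENNReal.ofReal r < f x} ∂μ := by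
        simp only [volume_restrict_Ioi_ofReal_lt]
    _ = μ.prod (volume.restrict (Ioi (0 : ℝ))) {p | ENNReal.ofReal p.2 < f p.1} :=
        (Measure.prod_apply hS).symm
    _ = ∫⁻ r in Ioi (0 : ℝ), μ {x | ENNReal.ofReal r < f x} := Measure.prod_apply_symm hS

theorem lintegral_eq_iSup_lintegral_min_natCast (hf : Measurable f) :
    ∫⁻ x, f x ∂μ = ⨆ n : ℕ, ∫⁻ x, min (f x) n ∂μ := by
  rw [← lintegral_iSup (fun n => hf.min measurable_const)
    fun m n hmn x => min_le_min_left (f x) (by exact_mod_cast hmn)]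
  refine lintegral_congr fun x => ?_
  rw [← inf_iSup_eq (f x), ENNReal.iSup_natCast, inf_top_eq]

theorem exists_measurable_ge_ae_eq (hf : AEMeasurable f μ) :
    ∃ g, Measurable g ∧ f ≤ g ∧ g =ᵐ[μ] f := by
  classical
  obtain ⟨N, hN, hN_meas, hN_null⟩ := exists_measurable_superset_of_null (ae_iff.1 hf.ae_eq_mk)
  refine ⟨N.piecewise (fun _ => ∞) (hf.mk f), measurable_const.piecewise hN_meas hf.measurable_mk,
    fun x => ?_, ?_⟩
  · by_cases hx : x ∈ N
    · simp [hx]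
    · simpa [hx] using (not_not.1 fun h => hx (hN h) : f x = hf.mk f x).le
  · filter_upwards [measure_eq_zero_iff_ae_notMem.1 hN_null, hf.ae_eq_mk] with x hxN hx
    simp [hxN, hx]

end MeasurableFunctions

section BrunnMinkowski

variable {A B : Set ℝ}

theorem volume_add_volume_le_volume_add_of_isCompact (hA : IsCompact A) (hA_ne : A.Nonempty)
    (hB : IsCompact B) (hB_ne : B.Nonempty) : volume A + volume B ≤ volume (A + B) := by
  obtain ⟨a, haA, ha⟩ := hA.exists_isGreatest hA_ne
  obtain ⟨b, hbB, hb⟩ := hB.exists_isLeast hB_ne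
  -- The translates `b + A` and `a + B` lie on either side of `a + b`.
  have hdisj : AEDisjoint volume (b +ᵥ A) (a +ᵥ B) := by
    refine measure_mono_null (t := {a + b}) ?_ Real.volume_singleton
    rintro _ ⟨⟨x, hx, rfl⟩, ⟨y, hy, hxy⟩⟩
    simp only [vadd_eq_add, mem_singleton_iff] at hxy ⊢
    linarith [ha hx, hb hy]
  calc volume A + volume B
      = volume (b +ᵥ A) + volume (a +ᵥ B) := by rw [measure_vadd, measure_vadd]
    _ = volume ((b +ᵥ A) ∪ (a +ᵥ B)) :=
        (measure_union₀ (hB.vadd a).measurableSet.nullMeasurableSet hdisj).symm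
    _ ≤ volume (A + B) := measure_mono <| union_subset
        ((vadd_set_subset_add hbB).trans (add_comm B A).subset) (vadd_set_subset_add haA)

theorem volume_add_volume_le_volume_add (hA : MeasurableSet A) (hA_ne : A.Nonempty)
    (hB : MeasurableSet B) (hB_ne : B.Nonempty) : volume A + volume B ≤ volume (A + B) := by
  obtain ⟨a, ha⟩ := hA_ne
  obtain ⟨b, hb⟩ := hB_ne
  rw [hA.measure_eq_iSup_isCompact, hB.measure_eq_iSup_isCompact]
  simp only [iSup_and']
  -- The inequality fails when one of the compact sets is empty, hence the adjoined points.
  refine ENNReal.biSup_add_biSup_le' ⟨∅, empty_subset A, isCompact_empty⟩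
    ⟨∅, empty_subset B, isCompact_empty⟩ fun K ⟨hKA, hK⟩ L ⟨hLB, hL⟩ => ?_
  calc volume K + volume L
      ≤ volume (insert a K) + volume (insert b L) := by gcongr <;> exact subset_insert _ _
    _ ≤ volume (insert a K + insert b L) := volume_add_volume_le_volume_add_of_isCompact
        (hK.insert a) (insert_nonempty a K) (hL.insert b) (insert_nonempty b L)
    _ ≤ volume (A + B) := measure_mono <|
        add_subset_add (insert_subset ha hKA) (insert_subset hb hLB)

theorem ofReal_mul_volume_add_le_volume_smul_add_smul (hA : MeasurableSet A) (hA_ne : A.Nonempty)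
    (hB : MeasurableSet B) (hB_ne : B.Nonempty) {t s : ℝ} (ht : 0 < t) (hs : 0 < s) :
    ENNReal.ofReal t * volume A + ENNReal.ofReal s * volume B ≤ volume (t • A + s • B) := by
  have volume_smul {r : ℝ} (hr : 0 < r) (S : Set ℝ) :
      ENNReal.ofReal r * volume S = volume (r • S) := by
    simp [Measure.addHaar_smul_of_nonneg volume hr.le]
  rw [volume_smul ht, volume_smul hs]
  exact volume_add_volume_le_volume_add (hA.const_smul₀ t) hA_ne.smul_set
    (hB.const_smul₀ s) hB_ne.smul_set

end BrunnMinkowski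

section RealLine

variable {f g h : ℝ → ℝ≥0∞} {t s : ℝ}

theorem ofReal_mul_lintegral_add_le_lintegral_of_min_le (hf : Measurable f) (hg : Measurable g)
    (hh : Measurable h) (ht : 0 < t) (hs : 0 < s) (hfg : ⨆ x, f x = ⨆ x, g x)
    (hmin : ∀ x y, min (f x) (g y) ≤ h (t • x + s • y)) :
    ENNReal.ofReal t * (∫⁻ x, f x) + ENNReal.ofReal s * (∫⁻ x, g x) ≤ ∫⁻ x, h x := by
  have superlevel (r : ℝ) :
      ENNReal.ofReal t * volume {x | ENNReal.ofReal r < f x} +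
        ENNReal.ofReal s * volume {x | ENNReal.ofReal r < g x} ≤
      volume {x | ENNReal.ofReal r < h x} := by
    obtain hr | hr := lt_or_ge (ENNReal.ofReal r) (⨆ x, f x)
    · refine (ofReal_mul_volume_add_le_volume_smul_add_smul
        (measurableSet_lt measurable_const hf) (lt_iSup_iff.1 hr)
        (measurableSet_lt measurable_const hg) (lt_iSup_iff.1 (hr.trans_eq hfg)) ht hs).trans
        (measure_mono ?_)
      rintro _ ⟨_, ⟨x, hx, rfl⟩, _, ⟨y, hy, rfl⟩, rfl⟩
      exact (lt_min hx hy).trans_le (hmin x y)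
    · have hf_le x : f x ≤ ENNReal.ofReal r := (le_iSup f x).trans hr
      have hg_le x : g x ≤ ENNReal.ofReal r := (le_iSup g x).trans (hfg ▸ hr)
      simp [(hf_le _).not_gt, (hg_le _).not_gt]
  calc ENNReal.ofReal t * (∫⁻ x, f x) + ENNReal.ofReal s * (∫⁻ x, g x)
      = ENNReal.ofReal t * (∫⁻ r in Ioi (0 : ℝ), volume {x | ENNReal.ofReal r < f x}) +
          ENNReal.ofReal s * (∫⁻ r in Ioi (0 : ℝ), volume {x | ENNReal.ofReal r < g x}) := by
        rw [lintegral_eq_lintegral_measure_ofReal_lt hf,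
            lintegral_eq_lintegral_measure_ofReal_lt hg]
    _ ≤ ∫⁻ r in Ioi (0 : ℝ), (ENNReal.ofReal t * volume {x | ENNReal.ofReal r < f x} +
          ENNReal.ofReal s * volume {x | ENNReal.ofReal r < g x}) :=
        (add_le_add (lintegral_const_mul_le _ _) (lintegral_const_mul_le _ _)).trans
          (le_lintegral_add _ _)
    _ ≤ ∫⁻ r in Ioi (0 : ℝ), volume {x | ENNReal.ofReal r < h x} := lintegral_mono superlevel
    _ = ∫⁻ x, h x := (lintegral_eq_lintegral_measure_ofReal_lt hh).symm

theorem lintegral_rpow_mul_lintegral_rpow_le_of_iSup_ne_top (hf : Measurable f)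
    (hg : Measurable g) (hh : Measurable h) (hf_top : ⨆ x, f x ≠ ∞) (hg_top : ⨆ x, g x ≠ ∞)
    (ht : 0 < t) (hs : 0 < s) (hts : t + s = 1)
    (hfgh : ∀ x y, f x ^ t * g y ^ s ≤ h (t • x + s • y)) :
    (∫⁻ x, f x) ^ t * (∫⁻ x, g x) ^ s ≤ ∫⁻ x, h x := by
  set a := ⨆ x, f x
  set b := ⨆ x, g x
  obtain ha | ha := eq_or_ne a 0
  · simp [ENNReal.iSup_eq_zero.1 ha, ht]
  obtain hb | hb := eq_or_ne b 0
  · simp [ENNReal.iSup_eq_zero.1 hb, hs]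
  set c := a ^ t * b ^ s
  have hc : c ≠ 0 := by simp [c, ha, hb, hf_top, hg_top]
  have hc_top : c ≠ ∞ := by finiteness
  have div_rpow_mul_div_rpow (u v : ℝ≥0∞) : (u / a) ^ t * (v / b) ^ s = u ^ t * v ^ s / c := by
    rw [ENNReal.div_rpow_of_nonneg _ _ ht.le, ENNReal.div_rpow_of_nonneg _ _ hs.le,
      ENNReal.mul_div_mul_comm] <;> simp [ha, hb, hf_top, hg_top]
  have lintegral_div {d : ℝ≥0∞} (hd : d ≠ 0) (u : ℝ → ℝ≥0∞) :
      ∫⁻ x, u x / d = (∫⁻ x, u x) / d := by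
    simp only [div_eq_mul_inv]
    exact lintegral_mul_const' _ _ (ENNReal.inv_ne_top.2 hd)
  have normalised := ofReal_mul_lintegral_add_le_lintegral_of_min_le (f := fun x => f x / a)
    (g := fun x => g x / b) (h := fun x => h x / c) (by fun_prop) (by fun_prop) (by fun_prop) ht hs
    (by rw [← ENNReal.iSup_div, ← ENNReal.iSup_div, ENNReal.div_self ha hf_top,
      ENNReal.div_self hb hg_top])
    fun x y => calc min (f x / a) (g y / b)
      _ = min (f x / a) (g y / b) ^ t * min (f x / a) (g y / b) ^ s :=
        (ennreal_rpow_mul_rpow_self ht.le hs.le hts _).symm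
      _ ≤ (f x / a) ^ t * (g y / b) ^ s := by
        gcongr
        · exact min_le_left _ _
        · exact min_le_right _ _
      _ = f x ^ t * g y ^ s / c := div_rpow_mul_div_rpow _ _
      _ ≤ h (t • x + s • y) / c := by gcongr; exact hfgh x y
  calc (∫⁻ x, f x) ^ t * (∫⁻ x, g x) ^ s
      = c * ((∫⁻ x, f x / a) ^ t * (∫⁻ x, g x / b) ^ s) := by
        rw [lintegral_div ha, lintegral_div hb, div_rpow_mul_div_rpow,
          ENNReal.mul_div_cancel hc hc_top]
    _ ≤ c * ∫⁻ x, h x / c := by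
        gcongr
        exact (ennreal_geom_mean_le_arith_mean2_weighted ht hs hts _ _).trans normalised
    _ = ∫⁻ x, h x := by rw [lintegral_div hc, ENNReal.mul_div_cancel hc hc_top]

end RealLine

/-- A measure `μ` on a real vector space satisfies the Prékopa–Leindler inequality if
`f x ^ t * g y ^ s ≤ h (t • x + s • y)` for all `x`, `y` implies `(∫ f) ^ t * (∫ g) ^ s ≤ ∫ h`,
for all positive weights `t + s = 1`. As a property of the measure alone it can be carried from the
line to products, and along linear maps. Functions take values in `[0, ∞]`, so that the partial
integrals arising in Tonelli's theorem qualify as well. -/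
def SatisfiesPrekopaLeindler {E : Type*} [AddCommMonoid E] [Module ℝ E] [MeasurableSpace E]
    (μ : Measure E) : Prop :=
  ∀ ⦃f g h : E → ℝ≥0∞⦄, Measurable f → Measurable g → Measurable h →
    ∀ ⦃t s : ℝ⦄, 0 < t → 0 < s → t + s = 1 →
      (∀ x y, f x ^ t * g y ^ s ≤ h (t • x + s • y)) →
        (∫⁻ x, f x ∂μ) ^ t * (∫⁻ x, g x ∂μ) ^ s ≤ ∫⁻ x, h x ∂μ

theorem satisfiesPrekopaLeindler_volume_real : SatisfiesPrekopaLeindler (volume : Measure ℝ) := by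
  intro f g h hf hg hh t s ht hs hts hfgh
  have iSup_min_ne_top (u : ℝ → ℝ≥0∞) (n : ℕ) : ⨆ x, min (u x) n ≠ ∞ :=
    ne_top_of_le_ne_top (ENNReal.natCast_ne_top n) (iSup_le fun x => min_le_right _ _)
  rw [lintegral_eq_iSup_lintegral_min_natCast hf, lintegral_eq_iSup_lintegral_min_natCast hg,
    ennreal_iSup_rpow _ ht, ennreal_iSup_rpow _ hs]
  simp only [ENNReal.iSup_mul, ENNReal.mul_iSup]
  refine iSup₂_le fun _ _ => lintegral_rpow_mul_lintegral_rpow_le_of_iSup_ne_top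
    (hf.min measurable_const) (hg.min measurable_const) hh (iSup_min_ne_top f _)
    (iSup_min_ne_top g _) ht hs hts fun x y => le_trans ?_ (hfgh x y)
  gcongr <;> exact min_le_left _ _

section Permanence

variable {E F : Type*} [AddCommMonoid E] [Module ℝ E] [MeasurableSpace E]
  [AddCommMonoid F] [Module ℝ F] [MeasurableSpace F] {μ : Measure E} {ν : Measure F}

theorem satisfiesPrekopaLeindler_dirac (a : E) : SatisfiesPrekopaLeindler (Measure.dirac a) := by
  intro f g h hf hg hh t s _ _ hts hfgh
  rw [lintegral_dirac' a hf, lintegral_dirac' a hg, lintegral_dirac' a hh]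
  simpa only [Convex.combo_self hts] using hfgh a a

theorem SatisfiesPrekopaLeindler.smul (hμ : SatisfiesPrekopaLeindler μ) (c : ℝ≥0∞) :
    SatisfiesPrekopaLeindler (c • μ) := by
  intro f g h hf hg hh t s ht hs hts hfgh
  simp only [lintegral_smul_measure, smul_eq_mul]
  rw [ENNReal.mul_rpow_of_nonneg _ _ ht.le, ENNReal.mul_rpow_of_nonneg _ _ hs.le,
    mul_mul_mul_comm, ennreal_rpow_mul_rpow_self ht.le hs.le hts]
  gcongr
  exact hμ hf hg hh ht hs hts hfgh

theorem SatisfiesPrekopaLeindler.map (hμ : SatisfiesPrekopaLeindler μ) {L : E →ₗ[ℝ] F}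
    (hL : Measurable L) : SatisfiesPrekopaLeindler (μ.map L) := by
  intro f g h hf hg hh t s ht hs hts hfgh
  rw [lintegral_map hf hL, lintegral_map hg hL, lintegral_map hh hL]
  refine hμ (hf.comp hL) (hg.comp hL) (hh.comp hL) ht hs hts fun x y => ?_
  simpa only [Function.comp_apply, map_add, map_smul] using hfgh (L x) (L y)

theorem SatisfiesPrekopaLeindler.prod [SFinite ν] (hμ : SatisfiesPrekopaLeindler μ)
    (hν : SatisfiesPrekopaLeindler ν) : SatisfiesPrekopaLeindler (μ.prod ν) := by
  intro f g h hf hg hh t s ht hs hts hfgh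
  rw [lintegral_prod _ hf.aemeasurable, lintegral_prod _ hg.aemeasurable,
    lintegral_prod _ hh.aemeasurable]
  refine hμ hf.lintegral_prod_right' hg.lintegral_prod_right' hh.lintegral_prod_right' ht hs hts
    fun a b => hν ?_ ?_ ?_ ht hs hts fun x y => hfgh (a, x) (b, y)
  all_goals exact Measurable.comp ‹_› measurable_prodMk_left

theorem SatisfiesPrekopaLeindler.pi {n : ℕ} {E : Fin n → Type*} [∀ i, AddCommMonoid (E i)]
    [∀ i, Module ℝ (E i)] [∀ i, MeasurableSpace (E i)] {μ : ∀ i, Measure (E i)}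
    [∀ i, SigmaFinite (μ i)] (hμ : ∀ i, SatisfiesPrekopaLeindler (μ i)) :
    SatisfiesPrekopaLeindler (Measure.pi μ) := by
  induction n with
  | zero =>
    rw [Measure.pi_of_empty μ]
    exact satisfiesPrekopaLeindler_dirac _
  | succ n ih =>
    have cons_eq : ⇑(Fin.consLinearEquiv ℝ E).toLinearMap =
        (MeasurableEquiv.piFinSuccAbove E 0).symm := by
      ext p i
      refine Fin.cases ?_ (fun j => ?_) i <;> rfl
    rw [← (measurePreserving_piFinSuccAbove μ 0).symm.map_eq, ← cons_eq]
    exact ((hμ 0).prod (ih fun i => hμ i.succ)).map (cons_eq ▸ MeasurableEquiv.measurable _)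

end Permanence

theorem satisfiesPrekopaLeindler_of_isAddHaarMeasure {F : Type*} [AddCommGroup F] [Module ℝ F]
    [TopologicalSpace F] [IsTopologicalAddGroup F] [ContinuousSMul ℝ F] [T2Space F]
    [FiniteDimensional ℝ F] [MeasurableSpace F] [BorelSpace F] (μ : Measure F)
    [μ.IsAddHaarMeasure] : SatisfiesPrekopaLeindler μ := by
  let e : F ≃L[ℝ] (Fin (Module.finrank ℝ F) → ℝ) := ContinuousLinearEquiv.ofFinrankEq (by simp)
  have map_map_symm : ((μ.map e).map e.symm) = μ := by
    rw [Measure.map_map e.symm.continuous.measurable e.continuous.measurable]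
    simp
  rw [← map_map_symm, Measure.isAddLeftInvariant_eq_smul (μ.map e) volume]
  exact ((SatisfiesPrekopaLeindler.pi fun _ => satisfiesPrekopaLeindler_volume_real).smul _).map
    (L := e.symm.toLinearMap) e.symm.continuous.measurable

section Applications

variable {E F : Type*} [AddCommMonoid E] [Module ℝ E]
  [AddCommMonoid F] [Module ℝ F] [MeasurableSpace F] {μ : Measure F}

theorem SatisfiesPrekopaLeindler.lintegral_rpow_mul_lintegral_rpow_le
    (hμ : SatisfiesPrekopaLeindler μ) {f g h : F → ℝ≥0∞} (hh : AEMeasurable h μ) {t s : ℝ}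
    (ht : 0 < t) (hs : 0 < s) (hts : t + s = 1)
    (hfgh : ∀ x y, f x ^ t * g y ^ s ≤ h (t • x + s • y)) :
    (∫⁻ x, f x ∂μ) ^ t * (∫⁻ x, g x ∂μ) ^ s ≤ ∫⁻ x, h x ∂μ := by
  obtain ⟨f', hf', hf'_le, hf'_eq⟩ := exists_measurable_le_lintegral_eq μ f
  obtain ⟨g', hg', hg'_le, hg'_eq⟩ := exists_measurable_le_lintegral_eq μ g
  obtain ⟨h', hh', hh'_ge, hh'_eq⟩ := exists_measurable_ge_ae_eq hh
  rw [hf'_eq, hg'_eq, ← lintegral_congr_ae hh'_eq]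
  refine hμ hf' hg' hh' ht hs hts fun x y => le_trans ?_ ((hfgh x y).trans (hh'_ge _))
  gcongr
  exacts [hf'_le x, hg'_le y]

theorem SatisfiesPrekopaLeindler.integral_rpow_mul_integral_rpow_le
    (hμ : SatisfiesPrekopaLeindler μ) {f g h : F → ℝ} (hf0 : ∀ x, 0 ≤ f x) (hg0 : ∀ x, 0 ≤ g x)
    (hf : Integrable f μ) (hg : Integrable g μ) (hh : Integrable h μ) {t s : ℝ}
    (ht : 0 < t) (hs : 0 < s) (hts : t + s = 1)
    (hfgh : ∀ x y, f x ^ t * g y ^ s ≤ h (t • x + s • y)) :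
    (∫ x, f x ∂μ) ^ t * (∫ x, g x ∂μ) ^ s ≤ ∫ x, h x ∂μ := by
  have hh0 (x : F) : 0 ≤ h x :=
    (mul_nonneg (Real.rpow_nonneg (hf0 x) t) (Real.rpow_nonneg (hg0 x) s)).trans
      ((hfgh x x).trans_eq (by rw [Convex.combo_self hts]))
  have ofReal_rpow_mul_rpow {a b : ℝ} (ha : 0 ≤ a) (hb : 0 ≤ b) :
      ENNReal.ofReal (a ^ t * b ^ s) = ENNReal.ofReal a ^ t * ENNReal.ofReal b ^ s := by
    rw [ENNReal.ofReal_mul (Real.rpow_nonneg ha t), ENNReal.ofReal_rpow_of_nonneg ha ht.le,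
      ENNReal.ofReal_rpow_of_nonneg hb hs.le]
  rw [← ENNReal.ofReal_le_ofReal_iff (integral_nonneg hh0),
    ofReal_rpow_mul_rpow (integral_nonneg hf0) (integral_nonneg hg0),
    ofReal_integral_eq_lintegral_ofReal hf (.of_forall hf0),
    ofReal_integral_eq_lintegral_ofReal hg (.of_forall hg0),
    ofReal_integral_eq_lintegral_ofReal hh (.of_forall hh0)]
  refine hμ.lintegral_rpow_mul_lintegral_rpow_le hh.aemeasurable.ennreal_ofReal ht hs hts
    fun x y => ?_
  rw [← ofReal_rpow_mul_rpow (hf0 x) (hg0 y)]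
  exact ENNReal.ofReal_le_ofReal (hfgh x y)

/-- A real function is log-concave if along every segment it dominates the weighted geometric mean
of its values at the endpoints. Intended for nonnegative functions, for which this multiplicative
form, unlike concavity of `log ∘ f`, also makes sense where `f` vanishes. -/
def LogConcave (f : E → ℝ) : Prop :=
  ∀ (x y : E) (t : ℝ), t ∈ Icc (0 : ℝ) 1 → f x ^ t * f y ^ (1 - t) ≤ f (t • x + (1 - t) • y)

theorem LogConcave.integral_prod_right {f : E × F → ℝ} (hf : LogConcave f)
    (hμ : SatisfiesPrekopaLeindler μ) (hf0 : ∀ p, 0 ≤ f p)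
    (hint : ∀ x, Integrable (fun z => f (x, z)) μ) :
    LogConcave fun x => ∫ z, f (x, z) ∂μ := by
  intro x y t ht
  obtain rfl | ht0 := ht.1.eq_or_lt
  · simp
  obtain rfl | ht1 := ht.2.eq_or_lt
  · simp
  exact hμ.integral_rpow_mul_integral_rpow_le (fun z => hf0 (x, z)) (fun z => hf0 (y, z))
    (hint x) (hint y) (hint _) ht0 (sub_pos.2 ht1) (add_sub_cancel t 1)
    fun z w => hf (x, z) (y, w) t ht

end Applications

theorem prekopa_leindler_marginal_general {E F : Type*} [AddCommMonoid E] [Module ℝ E]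
    [AddCommGroup F] [Module ℝ F] [TopologicalSpace F] [IsTopologicalAddGroup F]
    [ContinuousSMul ℝ F] [T2Space F] [FiniteDimensional ℝ F] [MeasurableSpace F] [BorelSpace F]
    (μ : Measure F) [μ.IsAddHaarMeasure] {f : E × F → ℝ} (hf0 : ∀ p, 0 ≤ f p) (hf : LogConcave f)
    (hint : ∀ x, Integrable (fun z => f (x, z)) μ) :
    LogConcave fun x => ∫ z, f (x, z) ∂μ :=
  hf.integral_prod_right (satisfiesPrekopaLeindler_of_isAddHaarMeasure μ) hf0 hint

/-- Prékopa–Leindler marginal theorem: the marginal of a log-concave function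
is log-concave. -/
theorem prekopa_leindler_marginal (k m : ℕ) (hm0 : 0 < m) (hmk : m < k)
    (f : ((Fin m → ℝ) × (Fin (k - m) → ℝ)) → ℝ)
    (hmeas : Measurable f) (hnonneg : ∀ p, 0 ≤ f p)
    (hlc : ∀ (p q : (Fin m → ℝ) × (Fin (k - m) → ℝ)) (t : ℝ), t ∈ Set.Icc (0:ℝ) 1 →
      f p ^ t * f q ^ (1 - t) ≤ f (t • p + (1 - t) • q))
    (hint : ∀ x : Fin m → ℝ, Integrable (fun z => f (x, z))) :
    ∀ (x y : Fin m → ℝ) (t : ℝ), t ∈ Set.Icc (0:ℝ) 1 →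
      (∫ z, f (x, z)) ^ t * (∫ z, f (y, z)) ^ (1 - t) ≤
        ∫ z, f (t • x + (1 - t) • y, z) :=
  prekopa_leindler_marginal_general volume hnonneg hlc hint
end
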